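/- Let p be a prime and d a positive integer, and let Y be a d×d matrix over ℚ_p such that every coefficient of the characteristic polynomial χ_Y of degree strictly less than d has p-adic absolute value at most 1/p. Then for every n ≥ 0 one has ‖Yⁿ‖ ≤ p^{−⌊n/d⌋} · H_p(Y)^{d−1}, where ⌊n/d⌋ is the integer part of n/d. -/

import Mathlib

/-!
By Cayley–Hamilton, `Y ^ (m + d) = -∑ i < d, cᵢ • Y ^ (m + i)`, where `cᵢ` are the lower
coefficients of the characteristic polynomial. As `‖cᵢ‖ ≤ 1/p`, the ultrametric inequality turns a
common bound for `Y ^ m, …, Y ^ (m + d - 1)` into a bound for `Y ^ (m + d)` that is better by a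
factor `1/p`. Strong induction on the exponent then reduces the claim to exponents `n < d`, where
submultiplicativity of the sup norm gives `‖Y ^ n‖ ≤ H_p(Y) ^ n ≤ H_p(Y) ^ (d - 1)`.
-/

/-- The sup-of-entries norm on `d × d` matrices over `ℚ_p`. -/
noncomputable def matNorm {p : ℕ} [Fact p.Prime] {d : ℕ}
    (Z : Matrix (Fin d) (Fin d) ℚ_[p]) : ℝ :=
  ⨆ i, ⨆ j, ‖Z i j‖

/-- The local height `H_p(Z) = max(1, ‖Z‖)` of a matrix over `ℚ_p`. -/
noncomputable def localHeight {p : ℕ} [Fact p.Prime] {d : ℕ}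
    (Z : Matrix (Fin d) (Fin d) ℚ_[p]) : ℝ :=
  max 1 (matNorm Z)

lemma norm_entry_le_localHeight {p : ℕ} [Fact p.Prime] {d : ℕ}
    (Y : Matrix (Fin d) (Fin d) ℚ_[p]) (i j : Fin d) : ‖Y i j‖ ≤ localHeight Y := by
  refine le_trans ?_ (le_max_right 1 (matNorm Y))
  refine le_trans ?_ (le_ciSup (f := fun i => ⨆ j, ‖Y i j‖) (Set.finite_range _).bddAbove i)
  exact le_ciSup (f := fun j => ‖Y i j‖) (Set.finite_range _).bddAbove j

lemma norm_pow_entry_le {p : ℕ} [Fact p.Prime] {d : ℕ}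
    (Y : Matrix (Fin d) (Fin d) ℚ_[p]) (n : ℕ) (i j : Fin d) :
    ‖(Y ^ n) i j‖ ≤ localHeight Y ^ n := by
  have h0 : 0 ≤ localHeight Y := zero_le_one.trans (le_max_left _ _)
  induction n generalizing i j with
  | zero =>
    rw [pow_zero, pow_zero, Matrix.one_apply]
    split_ifs <;> simp
  | succ n ih =>
    rw [pow_succ, pow_succ, Matrix.mul_apply]
    refine IsUltrametricDist.norm_sum_le_of_forall_le_of_nonneg (by positivity) fun k _ => ?_
    rw [norm_mul]
    exact mul_le_mul (ih i k) (norm_entry_le_localHeight Y k j) (norm_nonneg _) (by positivity)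

/-- The Cayley–Hamilton theorem multiplied by `Y ^ m`, read entrywise. -/
lemma pow_add_entry_eq {R : Type*} [CommRing R] [Nontrivial R] {d : ℕ}
    (Y : Matrix (Fin d) (Fin d) R) (m : ℕ) (i j : Fin d) :
    (Y ^ (m + d)) i j = -∑ k ∈ Finset.range d, Y.charpoly.coeff k * (Y ^ (m + k)) i j := by
  have h := Matrix.aeval_self_charpoly Y
  have hdeg : Y.charpoly.natDegree = d := by simp [Matrix.charpoly_natDegree_eq_dim]
  have hlead : Y.charpoly.coeff d = 1 := by
    have := Matrix.charpoly_monic Y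
    rwa [Polynomial.Monic, Polynomial.leadingCoeff, hdeg] at this
  rw [Polynomial.aeval_eq_sum_range, hdeg, Finset.sum_range_succ, hlead, one_smul] at h
  have h2 := congrArg (fun M => (Y ^ m * M) i j) h
  simp only [mul_add, Finset.mul_sum, mul_smul_comm, ← pow_add, Matrix.add_apply,
    Matrix.sum_apply, Matrix.smul_apply, smul_eq_mul, mul_zero, Matrix.zero_apply] at h2
  exact eq_neg_of_add_eq_zero_right h2

/-- Let `p` be a prime and `d` a positive integer, and let `Y` be a `d × d`
matrix over `ℚ_p` such that every coefficient of the characteristic polynomial of `Y` of degree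
strictly less than `d` has `p`-adic absolute value at most `1/p`. Then for every `n ≥ 0` one
has `‖Yⁿ‖ ≤ p ^ (-⌊n/d⌋) * H_p(Y) ^ (d - 1)` (here `n / d` is natural division, i.e. the
integer part `⌊n/d⌋`). -/
theorem stmt_5 (p : ℕ) [Fact p.Prime] (d : ℕ) (hd : 0 < d)
    (Y : Matrix (Fin d) (Fin d) ℚ_[p])
    (hchi : ∀ i < d, ‖Y.charpoly.coeff i‖ ≤ (p : ℝ)⁻¹) :
    ∀ n : ℕ, matNorm (Y ^ n) ≤ ((p : ℝ) ^ (n / d))⁻¹ * localHeight Y ^ (d - 1) := by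
  have h1 : 1 ≤ localHeight Y := le_max_left _ _
  have hp : (1 : ℝ) ≤ p := by exact_mod_cast (Fact.out : p.Prime).one_lt.le
  have hp0 : (0 : ℝ) < p := by linarith
  have key : ∀ n : ℕ, ∀ i j, ‖(Y ^ n) i j‖ ≤
      ((p : ℝ) ^ (n / d))⁻¹ * localHeight Y ^ (d - 1) := by
    intro n
    induction n using Nat.strong_induction_on with
    | _ n ih =>
      intro i j
      rcases lt_or_ge n d with hn | hn
      · rw [Nat.div_eq_of_lt hn, pow_zero, inv_one, one_mul]
        exact (norm_pow_entry_le Y n i j).trans (pow_le_pow_right₀ h1 (by omega))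
      · obtain ⟨m, rfl⟩ := Nat.exists_eq_add_of_le' hn
        rw [pow_add_entry_eq, norm_neg]
        refine IsUltrametricDist.norm_sum_le_of_forall_le_of_nonneg (by positivity) fun k hk => ?_
        have hk' := Finset.mem_range.1 hk
        have hm : ((p : ℝ) ^ ((m + k) / d))⁻¹ ≤ ((p : ℝ) ^ (m / d))⁻¹ := by
          gcongr
          omega
        rw [norm_mul, Nat.add_div_right m hd, pow_succ', mul_inv, mul_assoc]
        refine mul_le_mul (hchi k hk') ?_ (norm_nonneg _) (by positivity)
        exact (ih (m + k) (by omega) i j).trans (by gcongr)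
  intro n
  have : Nonempty (Fin d) := ⟨⟨0, hd⟩⟩
  exact ciSup_le fun i => ciSup_le fun j => key n i j
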